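/- Assume the form ⟨−,−⟩ is symmetric (and nondegenerate). Let 0 ≤ k ≤ n and let r be an integer. Then there exists a subspace H ⊆ V with dim H = k and dim H − dim(H ∩ H^⊥) = r if and only if max{0, 2k − n} ≤ r ≤ k. -/

import Mathlib

open Module

/-- Left orthogonal complement `H^⊥ = {v | ⟨v,w⟩ = 0 for all w ∈ H}` of a subspace with
respect to a bilinear form. -/
def bperp {V : Type*} [AddCommGroup V] [Module ℂ V]
    (B : V →ₗ[ℂ] V →ₗ[ℂ] ℂ) (H : Submodule ℂ V) : Submodule ℂ V where
  carrier := {v | ∀ w ∈ H, B v w = 0}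
  add_mem' := by
    intro a b ha hb w hw
    rw [map_add, LinearMap.add_apply, ha w hw, hb w hw, add_zero]
  zero_mem' := by
    intro w hw
    simp
  smul_mem' := by
    intro c a ha w hw
    rw [map_smul, LinearMap.smul_apply, ha w hw, smul_zero]

/-!
Nondegeneracy gives `dim H^⊥ = n - k`, and `H ∩ H^⊥` lies in both `H` and `H^⊥`; this yields the
bounds on `r`.

Conversely, put `s = k - r`, so that `r + 2 s ≤ n`. The vectors of an orthogonal basis of `V` are
anisotropic and, as every scalar is a square, any two of them `x`, `y` have an isotropic combination
`x + c y`. Let `H` be spanned by `r` basis vectors together with `s` isotropic combinations of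
disjoint pairs of other basis vectors: its Gram matrix is diagonal with exactly `r` nonzero entries,
so the isotropic combinations span `H ∩ H^⊥`.
-/

section LinearIndependence

variable {ι κ R M : Type*} [Ring R] [AddCommGroup M] [Module R M]

theorem linearIndependent_of_sub_mem_of_disjoint {v u : ι → M} {N : Submodule R M}
    (hv : LinearIndependent R v) (hN : Disjoint (Submodule.span R (Set.range v)) N)
    (hu : ∀ i, u i - v i ∈ N) : LinearIndependent R u := by
  have hmkQ : N.mkQ ∘ u = N.mkQ ∘ v := funext fun i => (Submodule.Quotient.eq N).2 (hu i)
  refine LinearIndependent.of_comp N.mkQ ?_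
  rw [hmkQ]
  exact hv.map (by rwa [Submodule.ker_mkQ])

/-- The family obtained from `v` by keeping the vectors indexed by `ι` and replacing, for each
`j : κ`, the pair of vectors with index `j` in the two copies of `κ` by a combination of them, in
which the first one has coefficient `1`. Suitable `c` make these combinations isotropic. -/
def pairSum (v : (ι ⊕ κ) ⊕ κ → M) (c : κ → R) : ι ⊕ κ → M :=
  Sum.elim (fun i => v (.inl (.inl i))) (fun j => v (.inl (.inr j)) + c j • v (.inr j))

theorem linearIndependent_pairSum {v : (ι ⊕ κ) ⊕ κ → M} (hv : LinearIndependent R v)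
    (c : κ → R) : LinearIndependent R (pairSum v c) := by
  obtain ⟨hinl, -, hdisj⟩ := linearIndependent_sum.1 hv
  refine linearIndependent_of_sub_mem_of_disjoint hinl hdisj ?_
  rintro (i | j)
  · simp [pairSum]
  · have hmem : v (.inr j) ∈ Submodule.span R (Set.range (v ∘ Sum.inr)) :=
      Submodule.subset_span ⟨j, rfl⟩
    simpa [pairSum] using Submodule.smul_mem _ (c j) hmem

end LinearIndependence

section OrthogonalFamilies

variable {ι κ R M : Type*} [CommRing R] [AddCommGroup M] [Module R M]
  {B : LinearMap.BilinForm R M}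

theorem isOrthoᵢ_pairSum {v : (ι ⊕ κ) ⊕ κ → M} (hv : B.IsOrthoᵢ v) (c : κ → R) :
    B.IsOrthoᵢ (pairSum v c) := by
  rw [LinearMap.isOrthoᵢ_def] at hv ⊢
  rintro (i | i) (j | j) hij <;> simp_all [pairSum]

theorem span_inf_orthogonal_of_isOrthoᵢ [NoZeroDivisors R] {u : ι → M} (hu : B.IsOrthoᵢ u) :
    Submodule.span R (Set.range u) ⊓ B.orthogonal (Submodule.span R (Set.range u)) =
      Submodule.span R (u '' {i | B (u i) (u i) = 0}) := by
  apply le_antisymm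
  · rintro x ⟨hx, hperp⟩
    obtain ⟨c, rfl⟩ := Finsupp.mem_span_range_iff_exists_finsupp.1 hx
    refine Submodule.sum_mem _ fun i hi =>
      Submodule.smul_mem _ _ (Submodule.subset_span ⟨i, ?_, rfl⟩)
    have hpair : B (u i) (c.sum fun j a => a • u j) = c i * B (u i) (u i) := by
      rw [Finsupp.sum, map_sum, Finset.sum_eq_single_of_mem i hi, map_smul, smul_eq_mul]
      intro j _ hji
      rw [map_smul, hu hji.symm, smul_zero]
    have hzero : c i * B (u i) (u i) = 0 := hpair ▸ hperp _ (Submodule.subset_span ⟨i, rfl⟩)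
    exact (mul_eq_zero.1 hzero).resolve_left (Finsupp.mem_support_iff.1 hi)
  · rw [Submodule.span_le]
    rintro _ ⟨i, hi, rfl⟩
    have hker : Submodule.span R (Set.range u) ≤ LinearMap.ker (B.flip (u i)) := by
      rw [Submodule.span_le]
      rintro _ ⟨j, rfl⟩
      obtain rfl | hji := eq_or_ne j i
      · exact hi
      · exact hu hji
    exact ⟨Submodule.subset_span ⟨i, rfl⟩, fun y hy => hker hy⟩

end OrthogonalFamilies

section NondegenerateForms

variable {K V : Type*} [Field K] [AddCommGroup V] [Module K V] {B : LinearMap.BilinForm K V}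

theorem exists_add_smul_self_eq_zero (hK : ∀ a : K, IsSquare a) {x y : V} (hxy : B x y = 0)
    (hyx : B y x = 0) (hy : B y y ≠ 0) : ∃ c : K, B (x + c • y) (x + c • y) = 0 := by
  obtain ⟨c, hc⟩ := hK (-B x x / B y y)
  have hsq : c * c * B y y = -B x x := by rw [← hc, div_mul_cancel₀ _ hy]
  refine ⟨c, ?_⟩
  simp only [map_add, map_smul, LinearMap.add_apply, LinearMap.smul_apply, smul_eq_mul, hxy, hyx]
  linear_combination hsq

theorem exists_finrank_eq_add_and_finrank_inf_orthogonal_eq_of_isOrthoᵢ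
    {ι κ : Type*} [Fintype ι] [Fintype κ] (hK : ∀ a : K, IsSquare a)
    {v : (ι ⊕ κ) ⊕ κ → V} (hv : B.IsOrthoᵢ v) (hv₀ : ∀ a, B (v a) (v a) ≠ 0) :
    ∃ H : Submodule K V, finrank K H = Fintype.card ι + Fintype.card κ ∧
      finrank K ↥(H ⊓ B.orthogonal H) = Fintype.card κ := by
  have hisotropic (j : κ) := exists_add_smul_self_eq_zero hK
    (hv (Sum.inl_ne_inr (a := .inr j) (b := j))) (hv Sum.inr_ne_inl) (hv₀ (.inr j))
  choose c hc using hisotropic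
  have hindep : LinearIndependent K (pairSum v c) :=
    linearIndependent_pairSum (LinearMap.linearIndependent_of_isOrthoᵢ hv hv₀) c
  have hrange : {a | B (pairSum v c a) (pairSum v c a) = 0} = Set.range Sum.inr := by
    ext (i | j)
    · simpa [pairSum] using hv₀ (.inl (.inl i))
    · simpa [pairSum] using hc j
  refine ⟨Submodule.span K (Set.range (pairSum v c)), ?_, ?_⟩
  · rw [finrank_span_eq_card hindep, Fintype.card_sum]
  · rw [span_inf_orthogonal_of_isOrthoᵢ (isOrthoᵢ_pairSum hv c), hrange, ← Set.range_comp,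
      finrank_span_eq_card (hindep.comp _ Sum.inr_injective)]

variable [FiniteDimensional K V]

theorem finrank_add_finrank_inf_orthogonal_le (hB : B.Nondegenerate) (H : Submodule K V) :
    finrank K H + finrank K ↥(H ⊓ B.orthogonal H) ≤ finrank K V := by
  have hinf : finrank K ↥(H ⊓ B.orthogonal H) ≤ finrank K (B.orthogonal H) :=
    Submodule.finrank_mono inf_le_right
  have horth := LinearMap.BilinForm.finrank_orthogonal hB H
  have hH := H.finrank_le
  omega

theorem exists_finrank_eq_add_and_finrank_inf_orthogonal_eq [NeZero (2 : K)]
    (hK : ∀ a : K, IsSquare a) (hB : B.Nondegenerate) (hsymm : B.IsSymm) {r s : ℕ}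
    (hrs : r + 2 * s ≤ finrank K V) :
    ∃ H : Submodule K V, finrank K H = r + s ∧ finrank K ↥(H ⊓ B.orthogonal H) = s := by
  have : Invertible (2 : K) := invertibleOfNonzero two_ne_zero
  obtain ⟨b, hb⟩ := LinearMap.BilinForm.exists_orthogonal_basis
    (LinearMap.BilinForm.isSymm_iff.1 hsymm)
  have hcard : Fintype.card ((Fin r ⊕ Fin s) ⊕ Fin s) ≤ Fintype.card (Fin (finrank K V)) := by
    simp only [Fintype.card_sum, Fintype.card_fin]
    omega
  obtain ⟨e⟩ := Function.Embedding.nonempty_of_card_le hcard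
  simpa only [Fintype.card_fin] using
    exists_finrank_eq_add_and_finrank_inf_orthogonal_eq_of_isOrthoᵢ hK (v := b ∘ e)
      (fun _ _ hij => hb (e.injective.ne hij))
      fun a => hb.not_isOrtho_basis_self_of_separatingLeft hB.1 (e a)

theorem stmt_5_general [NeZero (2 : K)] (hK : ∀ a : K, IsSquare a) (hB : B.Nondegenerate)
    (hsymm : B.IsSymm) (k : ℕ) (r : ℤ) :
    (∃ H : Submodule K V, finrank K H = k ∧
        (finrank K H : ℤ) - (finrank K ↥(H ⊓ B.orthogonal H) : ℤ) = r) ↔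
      (max 0 (2 * (k : ℤ) - finrank K V) ≤ r ∧ r ≤ k) := by
  constructor
  · rintro ⟨H, hk, hr⟩
    have hle : finrank K ↥(H ⊓ B.orthogonal H) ≤ finrank K H := Submodule.finrank_mono inf_le_left
    have hadd := finrank_add_finrank_inf_orthogonal_le hB H
    omega
  · rintro ⟨hlow, hrk⟩
    lift r to ℕ using (le_max_left _ _).trans hlow
    obtain ⟨H, hH, hrad⟩ := exists_finrank_eq_add_and_finrank_inf_orthogonal_eq hK hB hsymm
      (r := r) (s := k - r) (by omega)
    exact ⟨H, by omega, by omega⟩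

end NondegenerateForms

theorem bperp_eq_orthogonal {V : Type*} [AddCommGroup V] [Module ℂ V]
    {B : LinearMap.BilinForm ℂ V} (hB : B.IsRefl) : bperp B = B.orthogonal :=
  funext fun _ => Submodule.ext fun _ => forall₂_congr fun _ _ => hB.eq_iff

/-- Proposition 3.9(1) (`prop:orbit-orth`): for a nondegenerate symmetric form on an
`n`-dimensional space and `0 ≤ k ≤ n`, a subspace `H` with `dim H = k` and
`dim H - dim (H ∩ H^⊥) = r` exists if and only if `max {0, 2k - n} ≤ r ≤ k`. -/
theorem stmt_5 {V : Type*} [AddCommGroup V] [Module ℂ V] [FiniteDimensional ℂ V]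
    (n : ℕ) (hn : finrank ℂ V = n)
    (B : V →ₗ[ℂ] V →ₗ[ℂ] ℂ)
    (hB : ∀ v, (∀ w, B v w = 0) → v = 0)
    (hsymm : ∀ v w, B v w = B w v)
    (k : ℕ) (hkn : k ≤ n) (r : ℤ) :
    (∃ H : Submodule ℂ V, finrank ℂ H = k ∧
        (finrank ℂ H : ℤ) - (finrank ℂ ↥(H ⊓ bperp B H) : ℤ) = r) ↔
      (max 0 (2 * (k : ℤ) - n) ≤ r ∧ r ≤ k) := by
  have hB' : LinearMap.BilinForm.IsSymm B := ⟨hsymm⟩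
  have hnd : B.Nondegenerate := ⟨hB, fun w hw => hB w fun v => (hsymm w v).trans (hw v)⟩
  rw [bperp_eq_orthogonal hB'.isRefl, ← hn]
  exact stmt_5_general IsAlgClosed.exists_eq_mul_self hnd hB' k r
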